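/- Let A = ⟨Q,Σ⟩ be a PFA with |Q| = n and |Σ| = m, and let ℓ > 0. The map sending a carefully synchronizing word w = a_{χ(1)}⋯a_{χ(ℓ)} of length ℓ for A to the assignment on the letter variables given by x_{i,t} ↦ 1 if χ(t) = i and x_{i,t} ↦ 0 otherwise is a bijection between the set of carefully synchronizing words of length ℓ for A and the set of restrictions to the letter variables of satisfying assignments of the SAT instance (V,C) encoding (A,ℓ). -/

import Mathlib

open Set

/-- The extension of the transition function of a PFA (with states `Fin n` and letters
`Fin m`) to subsets of states and words: `δ(S,ε) = S`, `δ(S,va) = ⋃_{q ∈ δ(S,v)} δ(q,a)`. -/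
def pfaExt {n m : ℕ} (δ : Fin n → Fin m → Option (Fin n))
    (S : Set (Fin n)) (w : List (Fin m)) : Set (Fin n) :=
  w.foldl (fun T a => {p | ∃ q ∈ T, δ q a = some p}) S

/-- A nonempty word `w = a₁⋯a_ℓ` is carefully synchronizing for the PFA `δ` if (C1) its
first letter is defined at every state, (C2) for `1 < t ≤ ℓ` the letter `a_t` is defined
at every state of `δ(Q, a₁⋯a_{t-1})`, and (C3) `|δ(Q,w)| = 1`. -/
def CarefulSync {n m : ℕ} (δ : Fin n → Fin m → Option (Fin n)) (w : List (Fin m)) : Prop :=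
  w ≠ [] ∧
  (∀ t : Fin w.length, ∀ q ∈ pfaExt δ Set.univ (w.take t.val), (δ q (w.get t)).isSome) ∧
  (pfaExt δ Set.univ w).ncard = 1

/-- Boolean variables of the SAT instance encoding `(A, ℓ)`: letter variables `x i t`
(`1 ≤ i ≤ m`, `1 ≤ t ≤ ℓ`) and state variables `y j t` (`1 ≤ j ≤ n`, `0 ≤ t ≤ ℓ`). -/
inductive SatVar (n m ℓ : ℕ) : Type where
  | x : Fin m → Fin ℓ → SatVar n m ℓ
  | y : Fin n → Fin (ℓ + 1) → SatVar n m ℓ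
deriving DecidableEq

/-- A literal: a variable together with a polarity (`true` = positive, `false` = negated). -/
abbrev SatLit (n m ℓ : ℕ) := SatVar n m ℓ × Bool

/-- A clause is a disjunction of literals, represented as a list. -/
abbrev SatClause (n m ℓ : ℕ) := List (SatLit n m ℓ)

/-- A truth assignment satisfies a clause if it makes at least one of its literals true. -/
def SatisfiesClause {n m ℓ : ℕ} (φ : SatVar n m ℓ → Bool) (c : SatClause n m ℓ) : Prop :=
  ∃ l ∈ c, φ l.1 = l.2

/-- A truth assignment satisfies a set of clauses if it satisfies every clause in it. -/
def Satisfies {n m ℓ : ℕ} (φ : SatVar n m ℓ → Bool) (C : Set (SatClause n m ℓ)) : Prop :=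
  ∀ c ∈ C, SatisfiesClause φ c

/-- The group `I` of initial clauses: the unit clauses `y_{j,0}` for `1 ≤ j ≤ n`. -/
def clausesI (n m ℓ : ℕ) : Set (SatClause n m ℓ) :=
  {c | ∃ j : Fin n, c = [(SatVar.y j 0, true)]}

/-- The group `L` of letter clauses: for each `t`, the clause `x_{1,t} ∨ ⋯ ∨ x_{m,t}`
and the clauses `¬x_{r,t} ∨ ¬x_{s,t}` for `1 ≤ r < s ≤ m`. -/
def clausesL (n m ℓ : ℕ) : Set (SatClause n m ℓ) :=
  {c | ∃ t : Fin ℓ, c = (List.finRange m).map fun i => ((SatVar.x i t : SatVar n m ℓ), true)} ∪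
  {c | ∃ t : Fin ℓ, ∃ r s : Fin m, r < s ∧
    c = [(SatVar.x r t, false), (SatVar.x s t, false)]}

/-- The group `T` of transition clauses: for each `t` and each pair `(q_j, a_i)`, the
clause `¬y_{j,t-1} ∨ ¬x_{i,t} ∨ y_{k,t}` if `δ(q_j, a_i) = {q_k}`, and the clause
`¬y_{j,t-1} ∨ ¬x_{i,t}` if `δ(q_j, a_i)` is undefined. -/
def clausesT {n m : ℕ} (δ : Fin n → Fin m → Option (Fin n)) (ℓ : ℕ) :
    Set (SatClause n m ℓ) :=
  {c | ∃ (t : Fin ℓ) (j : Fin n) (i : Fin m) (k : Fin n), δ j i = some k ∧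
    c = [(SatVar.y j t.castSucc, false), (SatVar.x i t, false), (SatVar.y k t.succ, true)]} ∪
  {c | ∃ (t : Fin ℓ) (j : Fin n) (i : Fin m), δ j i = none ∧
    c = [(SatVar.y j t.castSucc, false), (SatVar.x i t, false)]}

/-- The group `S` of synchronization clauses: `¬y_{r,ℓ} ∨ ¬y_{s,ℓ}` for `1 ≤ r < s ≤ n`. -/
def clausesS (n m ℓ : ℕ) : Set (SatClause n m ℓ) :=
  {c | ∃ r s : Fin n, r < s ∧
    c = [(SatVar.y r (Fin.last ℓ), false), (SatVar.y s (Fin.last ℓ), false)]}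

/-- The set `C = I ∪ L ∪ T ∪ S` of clauses of the SAT instance encoding `(A, ℓ)`. -/
def encodingClauses {n m : ℕ} (δ : Fin n → Fin m → Option (Fin n)) (ℓ : ℕ) :
    Set (SatClause n m ℓ) :=
  clausesI n m ℓ ∪ clausesL n m ℓ ∪ clausesT δ ℓ ∪ clausesS n m ℓ

theorem sat_enc_iff {n m ℓ : ℕ} (δ : Fin n → Fin m → Option (Fin n))
    (φ : SatVar n m ℓ → Bool) :
    Satisfies φ (encodingClauses δ ℓ) ↔
      (∀ j, φ (SatVar.y j 0) = true) ∧
      (∀ t, ∃ i, φ (SatVar.x i t) = true) ∧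
      (∀ t r s, r < s → φ (SatVar.x r t) = false ∨ φ (SatVar.x s t) = false) ∧
      (∀ (t : Fin ℓ) j i k, δ j i = some k → φ (SatVar.y j t.castSucc) = false ∨
        φ (SatVar.x i t) = false ∨ φ (SatVar.y k t.succ) = true) ∧
      (∀ (t : Fin ℓ) j i, δ j i = none → φ (SatVar.y j t.castSucc) = false ∨
        φ (SatVar.x i t) = false) ∧
      (∀ r s, r < s → φ (SatVar.y r (Fin.last ℓ)) = false ∨
        φ (SatVar.y s (Fin.last ℓ)) = false) := by
  constructor
  · intro h
    refine ⟨fun j => ?_, fun t => ?_, fun t r s hrs => ?_, fun t j i k hk => ?_,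
      fun t j i hk => ?_, fun r s hrs => ?_⟩
    · simpa [SatisfiesClause] using
        h _ (Or.inl (Or.inl (Or.inl ⟨j, rfl⟩)))
    · simpa [SatisfiesClause] using
        h _ (Or.inl (Or.inl (Or.inr (Or.inl ⟨t, rfl⟩))))
    · simpa [SatisfiesClause] using
        h _ (Or.inl (Or.inl (Or.inr (Or.inr ⟨t, r, s, hrs, rfl⟩))))
    · simpa [SatisfiesClause] using
        h _ (Or.inl (Or.inr (Or.inl ⟨t, j, i, k, hk, rfl⟩)))
    · simpa [SatisfiesClause] using
        h _ (Or.inl (Or.inr (Or.inr ⟨t, j, i, hk, rfl⟩)))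
    · simpa [SatisfiesClause] using
        h _ (Or.inr ⟨r, s, hrs, rfl⟩)
  · rintro ⟨h1, h2, h3, h4, h5, h6⟩ c hc
    rcases hc with ((⟨j, rfl⟩ | (⟨t, rfl⟩ | ⟨t, r, s, hrs, rfl⟩)) |
      (⟨t, j, i, k, hk, rfl⟩ | ⟨t, j, i, hk, rfl⟩)) | ⟨r, s, hrs, rfl⟩
    · simpa [SatisfiesClause] using h1 j
    · simpa [SatisfiesClause] using h2 t
    · simpa [SatisfiesClause] using h3 t r s hrs
    · simpa [SatisfiesClause] using h4 t j i k hk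
    · simpa [SatisfiesClause] using h5 t j i hk
    · simpa [SatisfiesClause] using h6 r s hrs

theorem pfaExt_take_succ {n m : ℕ} (δ : Fin n → Fin m → Option (Fin n))
    (S : Set (Fin n)) (w : List (Fin m)) (t : ℕ) (ht : t < w.length) :
    pfaExt δ S (w.take (t + 1)) =
      {p | ∃ q ∈ pfaExt δ S (w.take t), δ q w[t] = some p} := by
  rw [List.take_succ_eq_append_getElem ht]
  simp only [pfaExt, List.foldl_append, List.foldl_cons, List.foldl_nil]

/-- The map sending a carefully synchronizing word `w = a_{χ(1)} ⋯ a_{χ(ℓ)}` of length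
`ℓ` to the assignment of the letter variables given by `x_{i,t} ↦ 1` iff `χ(t) = i`
is a bijection between the set of carefully synchronizing words of length `ℓ` for `A`
and the set of restrictions to the letter variables of satisfying assignments of the
SAT instance encoding `(A, ℓ)`. -/
theorem csw_letter_assignment_bijection {n m ℓ : ℕ} (hn : 0 < n) (hm : 0 < m) (hℓ : 0 < ℓ)
    (δ : Fin n → Fin m → Option (Fin n)) :
    Set.BijOn
      (fun (w : List (Fin m)) => fun (i : Fin m) (t : Fin ℓ) => decide (w[t.val]? = some i))
      {w : List (Fin m) | w.length = ℓ ∧ CarefulSync δ w}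
      {g : Fin m → Fin ℓ → Bool | ∃ φ : SatVar n m ℓ → Bool,
        Satisfies φ (encodingClauses δ ℓ) ∧ g = fun i t => φ (SatVar.x i t)} := by
  classical
  refine ⟨?_, ?_, ?_⟩
  · rintro w ⟨rfl, hne, hdef, hcard⟩
    refine ⟨fun v => match v with
      | SatVar.x i t => decide (w[t.val]? = some i)
      | SatVar.y j t => decide (j ∈ pfaExt δ Set.univ (w.take t.val)), ?_, rfl⟩
    rw [sat_enc_iff]
    refine ⟨fun j => ?_, fun t => ⟨w[t.val], ?_⟩, fun t r s hrs => ?_, fun t j i k hk => ?_,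
      fun t j i hk => ?_, fun r s hrs => ?_⟩
    · simp [pfaExt]
    · simp
    · by_contra hcon
      simp at hcon
      exact hrs.ne (hcon.1.symm.trans hcon.2)
    · by_contra hcon
      simp at hcon
      obtain ⟨ha, hb, hc⟩ := hcon
      rw [pfaExt_take_succ δ _ w t.val t.isLt] at hc
      exact hc ⟨j, ha, by rw [hb]; exact hk⟩
    · by_contra hcon
      simp at hcon
      obtain ⟨ha, hb⟩ := hcon
      have := hdef t j ha
      simp [hb, hk] at this
    · by_contra hcon
      simp at hcon
      obtain ⟨a, ha⟩ := Set.ncard_eq_one.1 hcard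
      rw [ha] at hcon
      exact hrs.ne (hcon.1.trans hcon.2.symm)
  · rintro w ⟨hw, -⟩ w' ⟨hw', -⟩ h
    apply List.ext_getElem (hw.trans hw'.symm)
    intro t h1 h2
    have := congrFun (congrFun h w[t]) ⟨t, hw ▸ h1⟩
    simp [h1, h2] at this
    exact this.symm
  · rintro g ⟨φ, hφ, rfl⟩
    rw [sat_enc_iff] at hφ
    obtain ⟨h1, h2, h3, h4, h5, h6⟩ := hφ
    choose χ hχ using h2
    have huniq : ∀ t i, φ (SatVar.x i t) = true → i = χ t := by
      intro t i hi
      by_contra hne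
      rcases lt_or_gt_of_ne hne with hlt | hlt
      · have := h3 t _ _ hlt
        simp [hi, hχ] at this
      · have := h3 t _ _ hlt
        simp [hi, hχ] at this
    have hlen : (List.ofFn χ).length = ℓ := List.length_ofFn
    have hsub : ∀ t (ht : t ≤ ℓ), ∀ q ∈ pfaExt δ Set.univ ((List.ofFn χ).take t),
        φ (SatVar.y q ⟨t, Nat.lt_succ_of_le ht⟩) = true := by
      intro t
      induction t with
      | zero => intro _ q _; exact h1 q
      | succ t ih =>
        intro ht q hq
        rw [pfaExt_take_succ _ _ _ _ (by omega)] at hq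
        obtain ⟨p, hp, hpq⟩ := hq
        have hy := ih (by omega) p hp
        rw [List.getElem_ofFn] at hpq
        have := h4 ⟨t, ht⟩ p _ q hpq
        rw [hχ] at this
        simp only [Fin.castSucc_mk, Fin.succ_mk, hy] at this
        simpa using this
    have hd : ∀ t (ht : t < ℓ), ∀ q ∈ pfaExt δ Set.univ ((List.ofFn χ).take t),
        (δ q (χ ⟨t, ht⟩)).isSome := by
      intro t ht q hq
      have hy := hsub t ht.le q hq
      by_contra hcon
      have := h5 ⟨t, ht⟩ q _ (by simpa using hcon)
      rw [hχ] at this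
      simp [hy] at this
    have hnon : ∀ t (ht : t ≤ ℓ), (pfaExt δ Set.univ ((List.ofFn χ).take t)).Nonempty := by
      intro t
      induction t with
      | zero => intro _; exact ⟨⟨0, hn⟩, by simp [pfaExt]⟩
      | succ t ih =>
        intro ht
        obtain ⟨q, hq⟩ := ih (by omega)
        obtain ⟨p, hp⟩ := Option.isSome_iff_exists.1 (hd t ht q hq)
        rw [pfaExt_take_succ _ _ _ _ (by omega)]
        exact ⟨p, q, hq, by rw [List.getElem_ofFn]; exact hp⟩
    have htake : (List.ofFn χ).take ℓ = List.ofFn χ := List.take_of_length_le hlen.le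
    refine ⟨List.ofFn χ, ⟨hlen, ?_, ?_, ?_⟩, ?_⟩
    · intro h
      rw [h] at hlen
      simp at hlen
      omega
    · intro t q hq
      have := hd t.val (lt_of_lt_of_eq t.isLt hlen) q hq
      simpa using this
    · have hN := hnon ℓ le_rfl
      have hS := hsub ℓ le_rfl
      rw [htake] at hN hS
      obtain ⟨q, hq⟩ := hN
      rw [Set.ncard_eq_one]
      refine ⟨q, Set.eq_singleton_iff_unique_mem.2 ⟨hq, fun p hp => ?_⟩⟩
      have e1 : φ (SatVar.y q (Fin.last ℓ)) = true := hS q hq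
      have e2 : φ (SatVar.y p (Fin.last ℓ)) = true := hS p hp
      by_contra hne
      rcases lt_or_gt_of_ne hne with hlt | hlt
      · have := h6 _ _ hlt
        simp [e1, e2] at this
      · have := h6 _ _ hlt
        simp [e1, e2] at this
    · funext i t
      rw [Bool.eq_iff_iff]
      simp
      constructor
      · rintro rfl; exact hχ t
      · intro h; exact (huniq t i h).symm
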